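/- Suppose v_0 = v*, n = 2^L ≥ 2 is a power of two, and η ≤ 0.1 / max_{i∈[n]} ‖y_i‖₂². Then under Oja's update rule, η ∑_{i=1}^{n} ⟨y_i, P v̂_{i−1}⟩² ≤ 100 · α² · L² · log ‖v_n‖₂, where L = log₂ n. -/

import Mathlib

open RealInnerProductSpace

/-!
The learning rate disappears on setting `x i = √η • y (i + 1)`. With `c i = ⟪x i, v i⟫`, projecting
the update rule gives `P (v k) = ∑ i < k, c i • P (x i)`, so the left-hand side is a weighted sum
of squares of `⟪P (x k), ∑ i < k, c i • P (x i)⟫`, with weights `‖v k‖⁻²` that decrease in `k`. The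
hypothesis on `α` says that the vectors `P (x i)` satisfy a Bessel inequality with constant `α`; by
duality, the interaction of an earlier block of indices with a later one costs at most `α² ∑ c i²
‖v i‖⁻²`. Halving the index range recursively and combining the levels by Minkowski's inequality
gives `α² L² ∑ c i² ‖v i‖⁻²`. Finally `c i² ‖v i‖⁻²` is bounded by a multiple of the increment of
`log ‖v i‖`, so the last sum telescopes.
-/

open Finset

variable {E ι : Type*} [NormedAddCommGroup E] [InnerProductSpace ℝ E]

lemma starProjection_orthogonal_span_singleton_apply {u : E} (hu : ‖u‖ = 1) (x : E) :
    (ℝ ∙ u)ᗮ.starProjection x = x - ⟪u, x⟫ • u := by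
  rw [Submodule.starProjection_orthogonal_val, Submodule.starProjection_unit_singleton ℝ hu]

lemma mul_le_of_le_div_sup' {s : Finset ι} (hs : s.Nonempty) {f : ι → ℝ} (hf : ∀ i ∈ s, 0 ≤ f i)
    {a b : ℝ} (ha : 0 ≤ a) (hb : 0 ≤ b) (hab : a ≤ b / s.sup' hs f) {i : ι} (hi : i ∈ s) :
    a * f i ≤ b :=
  (mul_le_mul_of_nonneg_left (le_sup' f hi) ha).trans
    (mul_le_of_le_div₀ hb ((hf i hi).trans (le_sup' f hi)) hab)

/-- The family `z` satisfies a Bessel inequality on `s` with constant `β`; for `0 ≤ β` this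
bounds the operator norm of `∑ i ∈ s, z i (z i)ᵀ` by `β`. -/
def IsBesselOn (s : Finset ι) (z : ι → E) (β : ℝ) : Prop :=
  ∀ w, ∑ i ∈ s, ⟪z i, w⟫ ^ 2 ≤ β * ‖w‖ ^ 2

namespace IsBesselOn

variable {s t : Finset ι} {z : ι → E} {β : ℝ}

lemma mono (hz : IsBesselOn t z β) (hst : s ⊆ t) : IsBesselOn s z β := fun w =>
  (sum_le_sum_of_subset_of_nonneg hst fun _ _ _ => sq_nonneg _).trans (hz w)

lemma norm_sum_smul_sq_le (hz : IsBesselOn s z β) (hβ : 0 ≤ β) (c : ι → ℝ) :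
    ‖∑ i ∈ s, c i • z i‖ ^ 2 ≤ β * ∑ i ∈ s, c i ^ 2 := by
  set u := ∑ i ∈ s, c i • z i with hu
  have norm_sq_eq : ‖u‖ ^ 2 = ∑ i ∈ s, c i * ⟪z i, u⟫ := by
    rw [← real_inner_self_eq_norm_sq]
    nth_rw 1 [hu]
    simp only [sum_inner, real_inner_smul_left]
  have hmul : ‖u‖ ^ 2 * ‖u‖ ^ 2 ≤ (β * ∑ i ∈ s, c i ^ 2) * ‖u‖ ^ 2 :=
    calc ‖u‖ ^ 2 * ‖u‖ ^ 2 = (∑ i ∈ s, c i * ⟪z i, u⟫) ^ 2 := by rw [norm_sq_eq, sq]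
      _ ≤ (∑ i ∈ s, c i ^ 2) * ∑ i ∈ s, ⟪z i, u⟫ ^ 2 := sum_mul_sq_le_sq_mul_sq s c _
      _ ≤ (∑ i ∈ s, c i ^ 2) * (β * ‖u‖ ^ 2) := by gcongr; exact hz u
      _ = (β * ∑ i ∈ s, c i ^ 2) * ‖u‖ ^ 2 := by ring
  rcases (sq_nonneg ‖u‖).eq_or_lt with hzero | hpos
  · rw [← hzero]
    positivity
  · exact le_of_mul_le_mul_right hmul hpos

lemma sum_mul_inner_sum_smul_sq_le (hs : IsBesselOn s z β) (ht : IsBesselOn t z β) (hβ : 0 ≤ β)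
    {r : ι → ℝ} {ρ : ℝ} (hρ : 0 ≤ ρ) (hrs : ∀ i ∈ s, ρ ≤ r i) (hrt : ∀ k ∈ t, r k ≤ ρ)
    (c : ι → ℝ) :
    ∑ k ∈ t, r k * ⟪z k, ∑ i ∈ s, c i • z i⟫ ^ 2 ≤ β ^ 2 * ∑ i ∈ s, r i * c i ^ 2 :=
  calc ∑ k ∈ t, r k * ⟪z k, ∑ i ∈ s, c i • z i⟫ ^ 2
      ≤ ∑ k ∈ t, ρ * ⟪z k, ∑ i ∈ s, c i • z i⟫ ^ 2 := by gcongr with k hk; exact hrt k hk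
    _ = ρ * ∑ k ∈ t, ⟪z k, ∑ i ∈ s, c i • z i⟫ ^ 2 := (mul_sum ..).symm
    _ ≤ ρ * (β * ‖∑ i ∈ s, c i • z i‖ ^ 2) := by gcongr; exact ht _
    _ ≤ ρ * (β * (β * ∑ i ∈ s, c i ^ 2)) := by gcongr; exact hs.norm_sum_smul_sq_le hβ c
    _ = β ^ 2 * ∑ i ∈ s, ρ * c i ^ 2 := by rw [← mul_sum]; ring
    _ ≤ β ^ 2 * ∑ i ∈ s, r i * c i ^ 2 := by gcongr with i hi; exact hrs i hi

end IsBesselOn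

lemma isBesselOn_starProjection {K : Submodule ℝ E} [K.HasOrthogonalProjection] {s : Finset ι}
    {x : ι → E} {α : ℝ} (hx : ∀ w ∈ K, ‖w‖ ≤ 1 → ∑ i ∈ s, ⟪w, x i⟫ ^ 2 ≤ α) :
    IsBesselOn s (fun i => K.starProjection (x i)) α := by
  intro w
  rcases eq_or_ne w 0 with rfl | hw
  · simp
  have norm_le_one : ‖K.starProjection (‖w‖⁻¹ • w)‖ ≤ 1 :=
    (K.norm_starProjection_apply_le _).trans (norm_smul_inv_norm (𝕜 := ℝ) hw).le
  calc ∑ i ∈ s, ⟪K.starProjection (x i), w⟫ ^ 2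
      = (∑ i ∈ s, ⟪K.starProjection (‖w‖⁻¹ • w), x i⟫ ^ 2) * ‖w‖ ^ 2 := by
        rw [sum_mul]
        refine sum_congr rfl fun i _ => ?_
        rw [K.inner_starProjection_left_eq_right, K.inner_starProjection_left_eq_right,
          real_inner_smul_left, real_inner_comm, ← K.inner_starProjection_left_eq_right]
        have := norm_ne_zero_iff.mpr hw
        field_simp
    _ ≤ α * ‖w‖ ^ 2 := by gcongr; exact hx _ (K.starProjection_apply_mem _) norm_le_one

/-- Minkowski's inequality in `ℓ²(r)`, combined with `2 √(A * B) ≤ A + B`. -/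
lemma sum_mul_add_sq_le {s : Finset ι} {r f g : ι → ℝ} (hr : ∀ i ∈ s, 0 ≤ r i) {p q A B : ℝ}
    (hp : 0 ≤ p) (hq : 0 ≤ q) (hA : 0 ≤ A) (hB : 0 ≤ B)
    (hf : ∑ i ∈ s, r i * f i ^ 2 ≤ p ^ 2 * A) (hg : ∑ i ∈ s, r i * g i ^ 2 ≤ q ^ 2 * B) :
    ∑ i ∈ s, r i * (f i + g i) ^ 2 ≤ (p + q) * (p * A + q * B) := by
  have cauchy_schwarz : (∑ i ∈ s, r i * (f i * g i)) ^ 2 ≤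
      (∑ i ∈ s, r i * f i ^ 2) * ∑ i ∈ s, r i * g i ^ 2 :=
    sum_sq_le_sum_mul_sum_of_sq_le_mul s (fun i hi => mul_nonneg (hr i hi) (sq_nonneg _))
      (fun i hi => mul_nonneg (hr i hi) (sq_nonneg _)) fun i _ => le_of_eq (by ring)
  have cross_le : ∑ i ∈ s, r i * (f i * g i) ≤ p * q * ((A + B) / 2) := by
    refine le_of_sq_le_sq ?_ (by positivity)
    calc (∑ i ∈ s, r i * (f i * g i)) ^ 2
        ≤ (∑ i ∈ s, r i * f i ^ 2) * ∑ i ∈ s, r i * g i ^ 2 := cauchy_schwarz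
      _ ≤ (p ^ 2 * A) * (q ^ 2 * B) :=
        mul_le_mul hf hg (sum_nonneg fun i hi => mul_nonneg (hr i hi) (sq_nonneg _)) (by positivity)
      _ = (p * q) ^ 2 * (A * B) := by ring
      _ ≤ (p * q) ^ 2 * ((A + B) / 2) ^ 2 := by gcongr; nlinarith [sq_nonneg (A - B)]
      _ = (p * q * ((A + B) / 2)) ^ 2 := by ring
  calc ∑ i ∈ s, r i * (f i + g i) ^ 2
      = ∑ i ∈ s, r i * f i ^ 2 + 2 * ∑ i ∈ s, r i * (f i * g i) + ∑ i ∈ s, r i * g i ^ 2 := by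
        rw [mul_sum, ← sum_add_distrib, ← sum_add_distrib]
        exact sum_congr rfl fun i _ => by ring
    _ ≤ p ^ 2 * A + 2 * (p * q * ((A + B) / 2)) + q ^ 2 * B := by gcongr
    _ = (p + q) * (p * A + q * B) := by ring

/-- The `r`-weighted sum of squares of the correlations of each `z k`, `a ≤ k < b`, with the partial
sum of the series `∑ c i • z i` over the indices of the block `[a, b)` that precede `k`. -/
def blockEnergy (r c : ℕ → ℝ) (z : ℕ → E) (a b : ℕ) : ℝ :=
  ∑ k ∈ Ico a b, r k * ⟪z k, ∑ i ∈ Ico a k, c i • z i⟫ ^ 2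

lemma blockEnergy_eq_add (r c : ℕ → ℝ) (z : ℕ → E) {a m b : ℕ} (ham : a ≤ m) (hmb : m ≤ b) :
    blockEnergy r c z a b = blockEnergy r c z a m + ∑ k ∈ Ico m b,
      r k * (⟪z k, ∑ i ∈ Ico m k, c i • z i⟫ + ⟪z k, ∑ i ∈ Ico a m, c i • z i⟫) ^ 2 := by
  rw [blockEnergy, ← sum_Ico_consecutive _ ham hmb, blockEnergy]
  congr 1
  refine sum_congr rfl fun k hk => ?_
  rw [← sum_Ico_consecutive _ ham (mem_Ico.mp hk).1, inner_add_right, add_comm ⟪z k, _⟫]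

lemma blockEnergy_eq_zero (r c : ℕ → ℝ) (z : ℕ → E) {a b : ℕ} (hb : b ≤ a + 1) :
    blockEnergy r c z a b = 0 := by
  refine sum_eq_zero fun k hk => ?_
  have hka : k ≤ a := by grind
  simp [Ico_eq_empty_of_le hka]

section Dyadic

variable {z : ℕ → E} {c r : ℕ → ℝ} {β : ℝ} {a b : ℕ}

lemma blockEnergy_le_of_halves {m : ℕ} (ham : a ≤ m) (hmb : m ≤ b)
    (hz : IsBesselOn (Ico a b) z β) (hβ : 0 ≤ β) (hr : ∀ i, 0 ≤ r i)
    (hanti : AntitoneOn r (Set.Ico a b)) {l : ℝ} (hl : 0 ≤ l)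
    (hleft : blockEnergy r c z a m ≤ β ^ 2 * l ^ 2 * ∑ k ∈ Ico a m, r k * c k ^ 2)
    (hright : blockEnergy r c z m b ≤ β ^ 2 * l ^ 2 * ∑ k ∈ Ico m b, r k * c k ^ 2) :
    blockEnergy r c z a b ≤ β ^ 2 * (l + 1) ^ 2 * ∑ k ∈ Ico a b, r k * c k ^ 2 := by
  rcases hmb.eq_or_lt with rfl | hmb'
  · refine hleft.trans ?_
    have := sum_nonneg fun k (_ : k ∈ Ico a m) => mul_nonneg (hr k) (sq_nonneg (c k))
    gcongr
    linarith
  rw [blockEnergy_eq_add r c z ham hmb, ← sum_Ico_consecutive _ ham hmb]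
  set A := ∑ k ∈ Ico a m, r k * c k ^ 2
  set B := ∑ k ∈ Ico m b, r k * c k ^ 2
  have hA : 0 ≤ A := sum_nonneg fun k _ => mul_nonneg (hr k) (sq_nonneg _)
  have hB : 0 ≤ B := sum_nonneg fun k _ => mul_nonneg (hr k) (sq_nonneg _)
  have interaction_le : ∑ k ∈ Ico m b, r k * ⟪z k, ∑ i ∈ Ico a m, c i • z i⟫ ^ 2 ≤ β ^ 2 * A :=
    (hz.mono (Ico_subset_Ico_right hmb)).sum_mul_inner_sum_smul_sq_le
      (hz.mono (Ico_subset_Ico_left ham)) hβ (hr m)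
      (fun i hi => hanti (by grind) (by grind) (by grind))
      (fun k hk => hanti (by grind) (by grind) (by grind)) c
  have later_le := sum_mul_add_sq_le (fun k (_ : k ∈ Ico m b) => hr k) hl zero_le_one
    (by positivity : 0 ≤ β ^ 2 * B) (by positivity : 0 ≤ β ^ 2 * A)
    (hright.trans_eq (by ring)) (interaction_le.trans_eq (by ring))
  calc _ ≤ β ^ 2 * l ^ 2 * A + (l + 1) * (l * (β ^ 2 * B) + 1 * (β ^ 2 * A)) :=
        add_le_add hleft later_le
    _ = β ^ 2 * (l + 1) ^ 2 * (A + B) - β ^ 2 * (l * A + (l + 1) * B) := by ring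
    _ ≤ β ^ 2 * (l + 1) ^ 2 * (A + B) := sub_le_self _ (by positivity)

lemma blockEnergy_le_of_le_two_pow {L : ℕ} (hab : a ≤ b) (hb : b ≤ a + 2 ^ L)
    (hz : IsBesselOn (Ico a b) z β) (hβ : 0 ≤ β) (hr : ∀ i, 0 ≤ r i)
    (hanti : AntitoneOn r (Set.Ico a b)) :
    blockEnergy r c z a b ≤ β ^ 2 * (L : ℝ) ^ 2 * ∑ k ∈ Ico a b, r k * c k ^ 2 := by
  induction L generalizing a b with
  | zero => simp [blockEnergy_eq_zero r c z hb]
  | succ L ih =>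
    obtain ⟨m, ham, hmb, hm, hb'⟩ : ∃ m, a ≤ m ∧ m ≤ b ∧ m ≤ a + 2 ^ L ∧ b ≤ m + 2 ^ L :=
      ⟨min b (a + 2 ^ L), by grind⟩
    rw [Nat.cast_succ]
    exact blockEnergy_le_of_halves ham hmb hz hβ hr hanti L.cast_nonneg
      (ih ham hm (hz.mono (Ico_subset_Ico_right hmb)) (hanti.mono (Set.Ico_subset_Ico_right hmb)))
      (ih hmb hb' (hz.mono (Ico_subset_Ico_left ham)) (hanti.mono (Set.Ico_subset_Ico_left ham)))

end Dyadic

lemma norm_sq_add_inner_sq_le (x v : E) :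
    ‖v‖ ^ 2 + ⟪x, v⟫ ^ 2 ≤ ‖v + ⟪x, v⟫ • x‖ * ‖v‖ :=
  calc ‖v‖ ^ 2 + ⟪x, v⟫ ^ 2 = ⟪v + ⟪x, v⟫ • x, v⟫ := by
        rw [inner_add_left, real_inner_smul_left, real_inner_self_eq_norm_sq, sq ⟪x, v⟫]
    _ ≤ ‖v + ⟪x, v⟫ • x‖ * ‖v‖ := real_inner_le_norm _ _

lemma norm_le_norm_add_inner_smul (x v : E) : ‖v‖ ≤ ‖v + ⟪x, v⟫ • x‖ := by
  rcases (norm_nonneg v).eq_or_lt with hv | hv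
  · rw [← hv]
    exact norm_nonneg _
  · refine le_of_mul_le_mul_right ?_ hv
    linarith [norm_sq_add_inner_sq_le x v, sq_nonneg ⟪x, v⟫]

lemma inv_norm_sq_mul_inner_sq_le_log {x v : E} {B : ℝ} (hv : v ≠ 0) (hx : ‖x‖ ^ 2 ≤ B) :
    (‖v‖ ^ 2)⁻¹ * ⟪x, v⟫ ^ 2 ≤ (1 + B) * (Real.log ‖v + ⟪x, v⟫ • x‖ - Real.log ‖v‖) := by
  have hv_pos : 0 < ‖v‖ := norm_pos_iff.mpr hv
  set t := (‖v‖ ^ 2)⁻¹ * ⟪x, v⟫ ^ 2 with ht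
  have ht_nonneg : 0 ≤ t := by positivity
  have inner_sq_eq : ⟪x, v⟫ ^ 2 = t * ‖v‖ ^ 2 := by rw [ht]; field_simp
  have ht_le : t ≤ B := by
    refine le_trans ?_ hx
    rw [ht, inv_mul_le_iff₀ (by positivity), ← mul_pow, mul_comm, ← sq_abs]
    gcongr
    exact abs_real_inner_le_norm x v
  have growth : (1 + t) * ‖v‖ ≤ ‖v + ⟪x, v⟫ • x‖ := by
    refine le_of_mul_le_mul_right ?_ hv_pos
    linarith [norm_sq_add_inner_sq_le x v, inner_sq_eq]
  have log_growth : Real.log (1 + t) ≤ Real.log ‖v + ⟪x, v⟫ • x‖ - Real.log ‖v‖ := by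
    rw [le_sub_iff_add_le, ← Real.log_mul (by positivity) hv_pos.ne']
    exact Real.log_le_log (by positivity) growth
  calc t = (1 + t) * (1 - (1 + t)⁻¹) := by field_simp; ring
    _ ≤ (1 + t) * Real.log (1 + t) := by
      gcongr
      exact Real.one_sub_inv_le_log_of_pos (by positivity)
    _ ≤ (1 + B) * Real.log (1 + t) := by
      gcongr
      exact Real.log_nonneg (by linarith)
    _ ≤ (1 + B) * (Real.log ‖v + ⟪x, v⟫ • x‖ - Real.log ‖v‖) := by
      gcongr
      linarith

/-- `v 0, …, v n` are the iterates of Oja's rule on the inputs `x 0, …, x (n - 1)`. The learning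
rate `η` is absorbed into the inputs, `x i = √η • y (i + 1)`. -/
def IsOjaSequence (n : ℕ) (x v : ℕ → E) : Prop :=
  ∀ i < n, v (i + 1) = v i + ⟪x i, v i⟫ • x i

namespace IsOjaSequence

variable {n : ℕ} {x v : ℕ → E}

lemma eq_add_sum (h : IsOjaSequence n x v) {k : ℕ} (hk : k ≤ n) :
    v k = v 0 + ∑ i ∈ Ico 0 k, ⟪x i, v i⟫ • x i := by
  induction k with
  | zero => simp
  | succ k ih => rw [h k hk, sum_Ico_succ_top k.zero_le, ← add_assoc, ← ih (by lia)]

lemma norm_monotoneOn (h : IsOjaSequence n x v) : MonotoneOn (fun i => ‖v i‖) (Set.Iic n) :=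
  monotoneOn_of_le_add_one Set.ordConnected_Iic fun i _ _ hi => by
    rw [h i hi]
    exact norm_le_norm_add_inner_smul (x i) (v i)

lemma norm_pos (h : IsOjaSequence n x v) (h0 : v 0 ≠ 0) {i : ℕ} (hi : i ≤ n) : 0 < ‖v i‖ :=
  (norm_pos_iff.mpr h0).trans_le (h.norm_monotoneOn n.zero_le hi i.zero_le)

lemma inv_norm_sq_antitoneOn (h : IsOjaSequence n x v) (h0 : v 0 ≠ 0) :
    AntitoneOn (fun i => (‖v i‖ ^ 2)⁻¹) (Set.Iic n) := fun i hi j hj hij => by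
  have hvi := h.norm_pos h0 hi
  have hij' : ‖v i‖ ≤ ‖v j‖ := h.norm_monotoneOn hi hj hij
  dsimp only
  gcongr

lemma sum_inv_norm_sq_mul_inner_sq_le_log (h : IsOjaSequence n x v) (h0 : v 0 ≠ 0) {B : ℝ}
    (hx : ∀ i < n, ‖x i‖ ^ 2 ≤ B) :
    ∑ i ∈ Ico 0 n, (‖v i‖ ^ 2)⁻¹ * ⟪x i, v i⟫ ^ 2 ≤ (1 + B) * Real.log (‖v n‖ / ‖v 0‖) :=
  calc ∑ i ∈ Ico 0 n, (‖v i‖ ^ 2)⁻¹ * ⟪x i, v i⟫ ^ 2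
      ≤ ∑ i ∈ Ico 0 n, (1 + B) * (Real.log ‖v (i + 1)‖ - Real.log ‖v i‖) := by
        refine sum_le_sum fun i hi => ?_
        have hin := (mem_Ico.mp hi).2
        rw [h i hin]
        exact inv_norm_sq_mul_inner_sq_le_log (norm_pos_iff.mp (h.norm_pos h0 hin.le)) (hx i hin)
    _ = (1 + B) * Real.log (‖v n‖ / ‖v 0‖) := by
        rw [← mul_sum, sum_Ico_sub (fun i => Real.log ‖v i‖) n.zero_le,
          Real.log_div (h.norm_pos h0 le_rfl).ne' (norm_ne_zero_iff.mpr h0)]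

variable {K : Submodule ℝ E} [K.HasOrthogonalProjection]

lemma sum_inner_starProjection_sq_eq_blockEnergy (h : IsOjaSequence n x v) (h0 : v 0 ∈ Kᗮ) :
    ∑ k ∈ Ico 0 n, ⟪x k, K.starProjection (‖v k‖⁻¹ • v k)⟫ ^ 2 =
      blockEnergy (fun k => (‖v k‖ ^ 2)⁻¹) (fun k => ⟪x k, v k⟫)
        (fun k => K.starProjection (x k)) 0 n := by
  refine sum_congr rfl fun k hk => ?_
  have starProjection_eq : K.starProjection (v k) =
      ∑ i ∈ Ico 0 k, ⟪x i, v i⟫ • K.starProjection (x i) := by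
    rw [h.eq_add_sum (mem_Ico.mp hk).2.le, map_add, K.starProjection_apply_eq_zero_iff.mpr h0,
      zero_add, map_sum]
    simp only [map_smul]
  rw [← starProjection_eq, K.inner_starProjection_left_eq_right,
    K.starProjection_eq_self_iff.mpr (K.starProjection_apply_mem _), map_smul,
    real_inner_smul_right, mul_pow, inv_pow]

lemma sum_inner_starProjection_sq_le (h : IsOjaSequence n x v) (h0 : v 0 ≠ 0) (h0K : v 0 ∈ Kᗮ)
    {L : ℕ} (hn : n ≤ 2 ^ L) {B α : ℝ} (hB : ∀ i < n, ‖x i‖ ^ 2 ≤ B)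
    (hα : ∀ w ∈ K, ‖w‖ ≤ 1 → ∑ i ∈ Ico 0 n, ⟪w, x i⟫ ^ 2 ≤ α) :
    ∑ k ∈ Ico 0 n, ⟪x k, K.starProjection (‖v k‖⁻¹ • v k)⟫ ^ 2 ≤
      (1 + B) * α ^ 2 * (L : ℝ) ^ 2 * Real.log (‖v n‖ / ‖v 0‖) := by
  have α_nonneg : 0 ≤ α := by simpa using hα 0 K.zero_mem (by simp)
  have weights_antitone : AntitoneOn (fun k => (‖v k‖ ^ 2)⁻¹) (Set.Ico 0 n) :=
    (h.inv_norm_sq_antitoneOn h0).mono fun k hk => hk.2.le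
  rw [h.sum_inner_starProjection_sq_eq_blockEnergy h0K]
  calc _ ≤ α ^ 2 * (L : ℝ) ^ 2 * ∑ k ∈ Ico 0 n, (‖v k‖ ^ 2)⁻¹ * ⟪x k, v k⟫ ^ 2 :=
        blockEnergy_le_of_le_two_pow n.zero_le (by simpa using hn)
          (isBesselOn_starProjection hα) α_nonneg (fun k => by positivity) weights_antitone
    _ ≤ α ^ 2 * (L : ℝ) ^ 2 * ((1 + B) * Real.log (‖v n‖ / ‖v 0‖)) := by
        gcongr
        exact h.sum_inv_norm_sq_mul_inner_sq_le_log h0 hB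
    _ = (1 + B) * α ^ 2 * (L : ℝ) ^ 2 * Real.log (‖v n‖ / ‖v 0‖) := by ring

end IsOjaSequence

theorem stmt_13_general {n L : ℕ} (hn : n ≤ 2 ^ L) (K : Submodule ℝ E)
    [K.HasOrthogonalProjection] (y : ℕ → E) {η B α : ℝ} (hη : 0 ≤ η)
    (hB : ∀ i ∈ Icc 1 n, η * ‖y i‖ ^ 2 ≤ B)
    (hα : ∀ w ∈ K, ‖w‖ ≤ 1 → η * ∑ i ∈ Icc 1 n, ⟪w, y i⟫ ^ 2 ≤ α)
    (v : ℕ → E) (hv0 : v 0 ≠ 0) (hv0K : v 0 ∈ Kᗮ)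
    (hv : ∀ i, 1 ≤ i → i ≤ n → v i = v (i - 1) + (η * ⟪y i, v (i - 1)⟫) • y i) :
    η * ∑ i ∈ Icc 1 n, ⟪y i, K.starProjection (‖v (i - 1)‖⁻¹ • v (i - 1))⟫ ^ 2 ≤
      (1 + B) * α ^ 2 * (L : ℝ) ^ 2 * Real.log (‖v n‖ / ‖v 0‖) := by
  have sum_shift (f : ℕ → ℝ) : η * ∑ i ∈ Icc 1 n, f i = ∑ i ∈ Ico 0 n, η * f (i + 1) := by
    rw [← mul_sum, sum_Ico_add' f 0 n 1]
    rfl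
  have isOja : IsOjaSequence n (fun i => √η • y (i + 1)) v := fun i hi => by
    rw [hv (i + 1) (by lia) hi, Nat.add_sub_cancel, real_inner_smul_left, smul_smul,
      mul_right_comm, Real.mul_self_sqrt hη]
  have key := isOja.sum_inner_starProjection_sq_le hv0 hv0K hn (B := B) (α := α)
    (fun i hi => ?_) fun w hwK hw => ?_
  · simpa only [real_inner_smul_left, mul_pow, Real.sq_sqrt hη, sum_shift, Nat.add_sub_cancel]
      using key
  · simpa only [norm_smul, mul_pow, Real.norm_eq_abs, sq_abs, Real.sq_sqrt hη]
      using hB (i + 1) (mem_Icc.mpr ⟨by lia, hi⟩)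
  · simpa only [real_inner_smul_right, mul_pow, Real.sq_sqrt hη, sum_shift] using hα w hwK hw

theorem stmt_13 {n d L : ℕ} (hd : 1 ≤ d) (hL : 1 ≤ L) (hn : n = 2 ^ L)
    (y : ℕ → EuclideanSpace ℝ (Fin d)) (η : ℝ) (hη : 0 < η)
    (hη' : η ≤ 0.1 / ((Finset.Icc 1 n).sup'
      (Finset.nonempty_Icc.mpr (by rw [hn]; exact Nat.one_le_two_pow : 1 ≤ n)) fun i => ‖y i‖ ^ 2))
    (vstar : EuclideanSpace ℝ (Fin d)) (hvstar : ‖vstar‖ = 1)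
    (α : ℝ) (hα : 0 < α)
    (halpha : ∀ w : EuclideanSpace ℝ (Fin d), ‖w‖ ≤ 1 → ⟪w, vstar⟫ = 0 →
      η * ∑ i ∈ Finset.Icc 1 n, ⟪w, y i⟫ ^ 2 ≤ α)
    (P : EuclideanSpace ℝ (Fin d) → EuclideanSpace ℝ (Fin d))
    (hP : ∀ x, P x = x - ⟪vstar, x⟫ • vstar)
    (v : ℕ → EuclideanSpace ℝ (Fin d)) (hv0 : v 0 = vstar)
    (hv : ∀ i, 1 ≤ i → i ≤ n → v i = v (i - 1) + (η * ⟪y i, v (i - 1)⟫) • y i) :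
    η * ∑ i ∈ Finset.Icc 1 n, ⟪y i, P (‖v (i - 1)‖⁻¹ • v (i - 1))⟫ ^ 2 ≤
      100 * α ^ 2 * (L : ℝ) ^ 2 * Real.log ‖v n‖ := by
  obtain rfl : P = (ℝ ∙ vstar)ᗮ.starProjection := funext fun x =>
    (hP x).trans (starProjection_orthogonal_span_singleton_apply hvstar x).symm
  have key := stmt_13_general hn.le (ℝ ∙ vstar)ᗮ y hη.le
    (fun _ => mul_le_of_le_div_sup' _ (fun _ _ => sq_nonneg _) hη.le (by norm_num) hη')
    (fun w hw hw1 => halpha w hw1 (Submodule.mem_orthogonal_singleton_iff_inner_left.mp hw))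
    v (by simp [hv0, ← norm_ne_zero_iff, hvstar])
    (hv0 ▸ Submodule.le_orthogonal_orthogonal _ (Submodule.mem_span_singleton_self _)) hv
  rw [hv0, hvstar, div_one] at key
  have lhs_nonneg := mul_nonneg hη.le (sum_nonneg fun i (_ : i ∈ Icc 1 n) =>
    sq_nonneg ⟪y i, (ℝ ∙ vstar)ᗮ.starProjection (‖v (i - 1)‖⁻¹ • v (i - 1))⟫)
  linarith
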